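/- Let k ≥ 1 and let m₁,…,m_k and n₁,…,n_k be positive integers. On the product E = ∏_{i=1}^k ℝ^{m_i}, the formula D((x_i)_i, (y_i)_i) = max_{1 ≤ i ≤ k} ‖x_i − y_i‖^{1/n_i} (Euclidean norms on each factor) defines a metric, and the Hausdorff dimension of the metric space (E, D) equals Σ_{i=1}^k n_i · m_i. -/

import Mathlib

open MeasureTheory ENNReal

/-!
A measure for which every ball of radius `r ≤ 1` has mass comparable to `r ^ Q` forces Hausdorff
dimension `Q`: the upper mass bound is the mass distribution principle, and the lower one limits
the number of disjoint balls, hence the number of balls needed to cover a ball of fixed radius.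
This regularity is inherited by snowflakes, where `Q` becomes `Q / α`, and by finite products with
the maximum metric, where the exponents add up, because a ball of the new space is a ball, resp. a
product of balls, of the old ones. The metric `D` is the maximum metric on the product of the
`(n i)⁻¹`-snowflakes of `ℝ ^ m i`, and Lebesgue measure on `ℝ ^ m i` is regular with `Q = m i`.
-/

section

open Metric Set Filter Metric.Snowflaking
open scoped NNReal Topology

section HausdorffMeasure

variable {X : Type*} [EMetricSpace X] [MeasurableSpace X] [BorelSpace X]

lemma hausdorffMeasure_le_of_coveringNumber_mul_le {A : Set X} {Q : ℝ} (hQ : 0 ≤ Q) {K : ℝ≥0∞}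
    (h : ∀ᶠ ε : ℝ≥0 in 𝓝[>] 0, (coveringNumber ε A : ℝ≥0∞) * (2 * ε) ^ Q ≤ K) :
    μH[Q] A ≤ K := by
  rcases eq_or_ne K ∞ with rfl | hK
  · exact le_top
  have covering_ne_top : ∀ᶠ ε : ℝ≥0 in 𝓝[>] 0, coveringNumber ε A ≠ ⊤ := by
    filter_upwards [h, self_mem_nhdsWithin] with ε hε hε0 htop
    have hpos : (2 * (ε : ℝ≥0∞)) ^ Q ≠ 0 :=
      (ENNReal.rpow_pos (by simpa using hε0) (by finiteness)).ne'
    rw [htop, ENat.toENNReal_top, ENNReal.top_mul hpos, top_le_iff] at hε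
    exact hK hε
  have radius_tendsto : Tendsto (fun ε : ℝ≥0 => 2 * (ε : ℝ≥0∞)) (𝓝[>] 0) (𝓝 0) := by
    have : Continuous fun ε : ℝ≥0 => 2 * (ε : ℝ≥0∞) :=
      ENNReal.continuous_const_mul ENNReal.ofNat_ne_top |>.comp ENNReal.continuous_coe
    simpa using (this.tendsto 0).mono_left nhdsWithin_le_nhds
  have (ε : ℝ≥0) : Countable (minimalCover ε A) := finite_minimalCover.countable
  refine (Measure.hausdorffMeasure_le_liminf_tsum Q A _ radius_tendsto
    (fun ε (x : minimalCover ε A) => closedEBall (x : X) ε)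
    (.of_forall fun _ _ => ediam_closedEBall_le) ?_).trans ?_
  · filter_upwards [covering_ne_top] with ε hε
    simpa only [iUnion_coe_set] using
      isCover_iff_subset_iUnion_closedEBall.1 (isCover_minimalCover hε)
  · refine liminf_le_of_le (by isBoundedDefault) fun b hb => ?_
    obtain ⟨ε, hbε, hε, hfin⟩ := (hb.and (h.and covering_ne_top)).exists
    calc b ≤ ∑' x : minimalCover ε A, ediam (closedEBall (x : X) ε) ^ Q := hbε
      _ ≤ ∑' _ : minimalCover ε A, (2 * (ε : ℝ≥0∞)) ^ Q :=
        ENNReal.tsum_le_tsum fun _ => ENNReal.rpow_le_rpow ediam_closedEBall_le hQ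
      _ = (coveringNumber ε A : ℝ≥0∞) * (2 * ε) ^ Q := by
        rw [ENNReal.tsum_set_const, encard_minimalCover hfin]
      _ ≤ K := hε

lemma measure_le_smul_hausdorffMeasure {μ : Measure X} {Q : ℝ} {C : ℝ≥0∞} (hC₀ : C ≠ 0)
    (hC : C ≠ ∞) (h : ∀ x, ∀ r ≤ 1, μ (closedEBall x r) ≤ C * r ^ Q) : μ ≤ C • μH[Q] := by
  have key : C⁻¹ • μ ≤ μH[Q] := Measure.le_hausdorffMeasure Q _ 1 one_pos fun s hs => by
    rcases s.eq_empty_or_nonempty with rfl | ⟨x, hx⟩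
    · simp
    have hsub : s ⊆ closedEBall x (ediam s) := fun y hy => edist_le_ediam_of_mem hy hx
    calc C⁻¹ * μ s ≤ C⁻¹ * (C * ediam s ^ Q) := by
          gcongr; exact (measure_mono hsub).trans (h x _ hs)
      _ = ediam s ^ Q := ENNReal.inv_mul_cancel_left hC₀ hC
  intro s
  simpa [mul_comm, ENNReal.inv_mul_le_iff hC₀ hC] using key s

end HausdorffMeasure

lemma packingNumber_mul_le_measure {X : Type*} [PseudoEMetricSpace X] [MeasurableSpace X]
    [OpensMeasurableSpace X] {μ : Measure X} {A U : Set X} {ε : ℝ≥0} {v : ℝ≥0∞}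
    (hv : ∀ x ∈ A, v ≤ μ (closedEBall x (ε / 2))) (hU : ∀ x ∈ A, closedEBall x (ε / 2) ⊆ U) :
    (packingNumber ε A : ℝ≥0∞) * v ≤ μ U := by
  simp only [packingNumber, ENat.toENNReal_iSup, ENNReal.iSup_mul, iSup_le_iff]
  intro S hSA hS
  have hdisj : Pairwise (Function.onFun Disjoint fun x : S => closedEBall (x : X) (ε / 2)) := by
    intro x y hxy
    refine disjoint_left.2 fun z hzx hzy => (hS x.2 y.2 (Subtype.coe_injective.ne hxy)).not_ge ?_
    calc edist (x : X) y ≤ edist z x + edist z y := edist_triangle_left ..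
      _ ≤ ε / 2 + ε / 2 := add_le_add hzx hzy
      _ = ε := ENNReal.add_halves _
  calc (S.encard : ℝ≥0∞) * v = ∑' _ : S, v := (ENNReal.tsum_set_const ..).symm
    _ ≤ ∑' x : S, μ (closedEBall (x : X) (ε / 2)) :=
      ENNReal.tsum_le_tsum fun x => hv x (hSA x.2)
    _ ≤ μ (⋃ x : S, closedEBall (x : X) (ε / 2)) :=
      tsum_meas_le_meas_iUnion_of_disjoint μ (fun _ => isClosed_closedEBall.measurableSet) hdisj
    _ ≤ μ U := measure_mono (iUnion_subset fun x => hU x (hSA x.2))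

lemma ennreal_rpow_sum_of_nonneg {ι : Type*} {s : Finset ι} {f : ι → ℝ} (r : ℝ≥0∞)
    (hf : ∀ i ∈ s, 0 ≤ f i) : r ^ ∑ i ∈ s, f i = ∏ i ∈ s, r ^ f i := by
  induction s using Finset.cons_induction with
  | empty => simp
  | cons i s hi ih =>
    rw [Finset.forall_mem_cons] at hf
    rw [Finset.sum_cons, Finset.prod_cons,
      ENNReal.rpow_add_of_nonneg _ _ hf.1 (Finset.sum_nonneg hf.2), ih hf.2]

/-- Ahlfors `Q`-regularity of a measure at scales at most `1`: balls of radius `r` have mass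
comparable to `r ^ Q`. Only small radii are constrained, so bounded spaces are allowed; the radius
`0` is included with the convention `0 ^ 0 = 1`. -/
def IsAhlforsRegular {X : Type*} [PseudoEMetricSpace X] [MeasurableSpace X] (μ : Measure X)
    (Q : ℝ≥0) : Prop :=
  ∃ c C : ℝ≥0, c ≠ 0 ∧ C ≠ 0 ∧ ∀ (x : X), ∀ r : ℝ≥0∞, r ≤ 1 →
    c * r ^ (Q : ℝ) ≤ μ (closedEBall x r) ∧ μ (closedEBall x r) ≤ C * r ^ (Q : ℝ)

namespace IsAhlforsRegular

lemma isLocallyFiniteMeasure {X : Type*} [PseudoEMetricSpace X] [MeasurableSpace X]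
    {μ : Measure X} {Q : ℝ≥0} (hμ : IsAhlforsRegular μ Q) : IsLocallyFiniteMeasure μ := by
  obtain ⟨c, C, -, -, h⟩ := hμ
  refine ⟨fun x => ⟨closedEBall x 1, closedEBall_mem_nhds x one_pos, ?_⟩⟩
  calc μ (closedEBall x 1) ≤ C * 1 ^ (Q : ℝ) := (h x 1 le_rfl).2
    _ < ∞ := by simp

lemma exists_packingNumber_closedEBall_mul_le {X : Type*} [PseudoEMetricSpace X]
    [MeasurableSpace X] [OpensMeasurableSpace X] {μ : Measure X} {Q : ℝ≥0}
    (hμ : IsAhlforsRegular μ Q) :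
    ∃ K : ℝ≥0, ∀ x : X, ∀ ε : ℝ≥0, ε ≤ 1 →
      (packingNumber ε (closedEBall x (1 / 2)) : ℝ≥0∞) * (ε : ℝ≥0∞) ^ (Q : ℝ) ≤ K := by
  obtain ⟨c, C, hc, -, h⟩ := hμ
  refine ⟨2 ^ (Q : ℝ) * (c⁻¹ * C), fun x ε hε => ?_⟩
  have half_le : (ε / 2 : ℝ≥0∞) ≤ 1 / 2 := by gcongr; exact_mod_cast hε
  have ball_subset : ∀ y ∈ closedEBall x (1 / 2), closedEBall y (ε / 2 : ℝ≥0∞) ⊆ closedEBall x 1 :=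
    fun y hy z hz => calc
      edist z x ≤ edist z y + edist y x := edist_triangle ..
      _ ≤ 1 / 2 + 1 / 2 := add_le_add (hz.trans half_le) hy
      _ = 1 := ENNReal.add_halves 1
  have packing_bound :
      (packingNumber ε (closedEBall x (1 / 2)) : ℝ≥0∞) * (c * (ε / 2 : ℝ≥0∞) ^ (Q : ℝ)) ≤ C :=
    calc _ ≤ μ (closedEBall x 1) := packingNumber_mul_le_measure
          (fun y _ => (h y _ (half_le.trans (by simp))).1) ball_subset
      _ ≤ C := by simpa using (h x 1 le_rfl).2
  have rescale : (ε : ℝ≥0∞) ^ (Q : ℝ) =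
      2 ^ (Q : ℝ) * ((c : ℝ≥0∞)⁻¹ * (c * (ε / 2 : ℝ≥0∞) ^ (Q : ℝ))) := by
    rw [ENNReal.inv_mul_cancel_left (by simpa) ENNReal.coe_ne_top,
      ← ENNReal.mul_rpow_of_nonneg _ _ Q.coe_nonneg, ENNReal.mul_div_cancel (by simp) (by simp)]
  calc _ = 2 ^ (Q : ℝ) * ((c : ℝ≥0∞)⁻¹ *
        (packingNumber ε (closedEBall x (1 / 2)) * (c * (ε / 2 : ℝ≥0∞) ^ (Q : ℝ)))) := by
        rw [rescale]; ring
    _ ≤ 2 ^ (Q : ℝ) * ((c : ℝ≥0∞)⁻¹ * C) := by gcongr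
    _ = _ := by
        rw [← ENNReal.coe_inv hc, ENNReal.coe_mul, ENNReal.coe_mul,
          ENNReal.coe_rpow_of_nonneg _ Q.coe_nonneg, ENNReal.coe_ofNat]

section Dimension

variable {X : Type*} [EMetricSpace X] [MeasurableSpace X] [BorelSpace X] {μ : Measure X} {Q : ℝ≥0}

lemma hausdorffMeasure_univ_ne_zero [Nonempty X] (hμ : IsAhlforsRegular μ Q) :
    μH[Q] (univ : Set X) ≠ 0 := by
  obtain ⟨c, C, hc, hC, h⟩ := hμ
  obtain ⟨x⟩ := ‹Nonempty X›
  have hμ_ne : μ univ ≠ 0 := by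
    have hball : (c : ℝ≥0∞) ≤ μ (closedEBall x 1) := by simpa using (h x 1 le_rfl).1
    have hpos : 0 < (c : ℝ≥0∞) := ENNReal.coe_pos.2 (pos_iff_ne_zero.2 hc)
    exact (hpos.trans_le (hball.trans (measure_mono (subset_univ _)))).ne'
  have hle : μ univ ≤ C * μH[Q] (univ : Set X) :=
    measure_le_smul_hausdorffMeasure (by simpa using hC) ENNReal.coe_ne_top
      (fun y r hr => (h y r hr).2) univ
  exact right_ne_zero_of_mul (hle.trans_lt' (pos_iff_ne_zero.2 hμ_ne)).ne'

lemma hausdorffMeasure_closedEBall_ne_top (hμ : IsAhlforsRegular μ Q) (x : X) :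
    μH[Q] (closedEBall x (1 / 2)) ≠ ∞ := by
  obtain ⟨K, hK⟩ := hμ.exists_packingNumber_closedEBall_mul_le
  have hle : μH[Q] (closedEBall x (1 / 2)) ≤ 2 ^ (Q : ℝ) * K := by
    refine hausdorffMeasure_le_of_coveringNumber_mul_le Q.coe_nonneg ?_
    filter_upwards [nhdsWithin_le_nhds (Iic_mem_nhds one_pos)] with ε hε
    calc _ ≤ (packingNumber ε (closedEBall x (1 / 2)) : ℝ≥0∞) * (2 * ε) ^ (Q : ℝ) := by
          gcongr; exact_mod_cast coveringNumber_le_packingNumber _ _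
      _ = 2 ^ (Q : ℝ) * (packingNumber ε (closedEBall x (1 / 2)) * (ε : ℝ≥0∞) ^ (Q : ℝ)) := by
          rw [ENNReal.mul_rpow_of_nonneg _ _ Q.coe_nonneg, mul_left_comm]
      _ ≤ 2 ^ (Q : ℝ) * K := by gcongr; exact hK x ε hε
  exact ne_top_of_le_ne_top (by finiteness) hle

lemma dimH_univ [SecondCountableTopology X] [Nonempty X] (hμ : IsAhlforsRegular μ Q) :
    dimH (univ : Set X) = Q := by
  refine le_antisymm (le_of_not_gt fun hlt => ?_)
    (le_dimH_of_hausdorffMeasure_ne_zero hμ.hausdorffMeasure_univ_ne_zero)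
  obtain ⟨x, -, hx⟩ := exists_mem_nhdsWithin_lt_dimH_of_lt_dimH hlt
  have hball : closedEBall x (1 / 2) ∈ 𝓝[univ] x := by
    rw [nhdsWithin_univ]; exact closedEBall_mem_nhds x (by simp)
  exact (hx _ hball).not_ge
    (dimH_le_of_hausdorffMeasure_ne_top (hμ.hausdorffMeasure_closedEBall_ne_top x))

end Dimension

lemma snowflaking {X : Type*} [PseudoEMetricSpace X] [MeasurableSpace X]
    [OpensMeasurableSpace X] {μ : Measure X} {Q : ℝ≥0} (hμ : IsAhlforsRegular μ Q) {α : ℝ≥0}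
    (hα₀ : 0 < (α : ℝ)) (hα₁ : (α : ℝ) ≤ 1) [MeasurableSpace (Snowflaking X α hα₀ hα₁)]
    [BorelSpace (Snowflaking X α hα₀ hα₁)] :
    IsAhlforsRegular (μ.map (toSnowflaking : X → Snowflaking X α hα₀ hα₁)) (Q / α) := by
  obtain ⟨c, C, hc, hC, h⟩ := hμ
  refine ⟨c, C, hc, hC, fun x r hr => ?_⟩
  have hexp : r ^ ((Q / α : ℝ≥0) : ℝ) = (r ^ (α : ℝ)⁻¹) ^ (Q : ℝ) := by
    rw [← ENNReal.rpow_mul, NNReal.coe_div, div_eq_inv_mul]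
  rw [Measure.map_apply continuous_toSnowflaking.measurable isClosed_closedEBall.measurableSet,
    preimage_toSnowflaking_closedEBall, hexp]
  exact h _ _ (ENNReal.rpow_le_one hr (inv_nonneg.2 hα₀.le))

protected lemma pi {ι : Type*} [Fintype ι] {X : ι → Type*} [∀ i, PseudoEMetricSpace (X i)]
    [∀ i, MeasurableSpace (X i)] {μ : ∀ i, Measure (X i)} [∀ i, SigmaFinite (μ i)] {Q : ι → ℝ≥0}
    (hμ : ∀ i, IsAhlforsRegular (μ i) (Q i)) :
    IsAhlforsRegular (Measure.pi μ) (∑ i, Q i) := by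
  choose c C hc hC h using hμ
  refine ⟨∏ i, c i, ∏ i, C i, Finset.prod_ne_zero_iff.2 fun i _ => hc i,
    Finset.prod_ne_zero_iff.2 fun i _ => hC i, fun x r hr => ?_⟩
  have hball : closedEBall x r = univ.pi fun i => closedEBall (x i) r := by
    ext y; simp [edist_pi_le_iff]
  have hexp : r ^ ((∑ i, Q i : ℝ≥0) : ℝ) = ∏ i, r ^ (Q i : ℝ) := by
    rw [NNReal.coe_sum]
    exact ennreal_rpow_sum_of_nonneg r fun i _ => (Q i).coe_nonneg
  rw [hball, Measure.pi_pi, hexp, ENNReal.ofNNReal_finsetProd, ENNReal.ofNNReal_finsetProd,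
    ← Finset.prod_mul_distrib, ← Finset.prod_mul_distrib]
  exact ⟨Finset.prod_le_prod' fun i _ => (h i (x i) r hr).1,
    Finset.prod_le_prod' fun i _ => (h i (x i) r hr).2⟩

lemma of_isAddHaarMeasure {E : Type*} [NormedAddCommGroup E] [NormedSpace ℝ E]
    [FiniteDimensional ℝ E] [MeasurableSpace E] [BorelSpace E] (μ : Measure E)
    [μ.IsAddHaarMeasure] : IsAhlforsRegular μ (Module.finrank ℝ E) := by
  obtain ⟨v, hv⟩ : ∃ v : ℝ≥0, (v : ℝ≥0∞) = μ (ball 0 1) :=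
    ⟨_, ENNReal.coe_toNNReal measure_ball_lt_top.ne⟩
  have hv₀ : v ≠ 0 := by
    rw [← ENNReal.coe_ne_zero, hv]; exact (measure_ball_pos _ _ one_pos).ne'
  refine ⟨v, v, hv₀, hv₀, fun x r hr => ?_⟩
  lift r to ℝ≥0 using (hr.trans_lt one_lt_top).ne
  have : μ (closedEBall x r) = v * r ^ ((Module.finrank ℝ E : ℝ≥0) : ℝ) := by
    rw [hv, closedEBall_coe, Measure.addHaar_closedBall μ x r.coe_nonneg, mul_comm,
      ENNReal.ofReal_pow r.coe_nonneg, ENNReal.ofReal_coe_nnreal, NNReal.coe_natCast,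
      ENNReal.rpow_natCast]
  exact ⟨this.ge, this.le⟩

end IsAhlforsRegular

lemma dist_pi_eq_ciSup {ι : Type*} [Fintype ι] [Nonempty ι] {X : ι → Type*}
    [∀ i, PseudoMetricSpace (X i)] (x y : ∀ i, X i) : dist x y = ⨆ i, dist (x i) (y i) :=
  eq_of_forall_ge_iff fun _ =>
    dist_pi_le_iff'.trans (ciSup_le_iff (finite_range _).bddAbove).symm

lemma dimH_univ_pi_snowflaking {ι : Type*} [Fintype ι] {X : ι → Type*} [∀ i, MetricSpace (X i)]
    [∀ i, SecondCountableTopology (X i)] [∀ i, Nonempty (X i)] [∀ i, MeasurableSpace (X i)]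
    [∀ i, OpensMeasurableSpace (X i)] {μ : ∀ i, Measure (X i)} {Q α : ι → ℝ≥0}
    (hμ : ∀ i, IsAhlforsRegular (μ i) (Q i)) (hα₀ : ∀ i, 0 < (α i : ℝ))
    (hα₁ : ∀ i, (α i : ℝ) ≤ 1) :
    dimH (univ : Set (∀ i, Snowflaking (X i) (α i) (hα₀ i) (hα₁ i))) =
      ∑ i, ((Q i / α i : ℝ≥0) : ℝ≥0∞) := by
  let _ (i : ι) : MeasurableSpace (Snowflaking (X i) (α i) (hα₀ i) (hα₁ i)) := borel _
  have _ (i : ι) : BorelSpace (Snowflaking (X i) (α i) (hα₀ i) (hα₁ i)) := ⟨rfl⟩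
  have _ (i : ι) : Nonempty (Snowflaking (X i) (α i) (hα₀ i) (hα₁ i)) :=
    toSnowflaking.symm.nonempty
  have hsnow (i : ι) := (hμ i).snowflaking (hα₀ i) (hα₁ i)
  have _ (i : ι) := (hsnow i).isLocallyFiniteMeasure
  rw [(IsAhlforsRegular.pi hsnow).dimH_univ, ENNReal.ofNNReal_finsetSum]

theorem hausdorff_dimension_of_snowflake_product_general
    {ι : Type*} [Fintype ι] [Nonempty ι] {X : ι → Type*} [∀ i, MetricSpace (X i)]
    [∀ i, SecondCountableTopology (X i)] [∀ i, Nonempty (X i)] [∀ i, MeasurableSpace (X i)]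
    [∀ i, OpensMeasurableSpace (X i)] {μ : ∀ i, Measure (X i)} {Q α : ι → ℝ≥0}
    (hμ : ∀ i, IsAhlforsRegular (μ i) (Q i)) (hα₀ : ∀ i, 0 < α i) (hα₁ : ∀ i, α i ≤ 1)
    (D : (∀ i, X i) → (∀ i, X i) → ℝ)
    (hD : ∀ x y, D x y = ⨆ i, dist (x i) (y i) ^ (α i : ℝ)) :
    (∀ x y, D x y = 0 ↔ x = y) ∧
    (∀ x y, D x y = D y x) ∧
    (∀ x y z, D x z ≤ D x y + D y z) ∧
    ∃ inst : MetricSpace (∀ i, X i),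
      (∀ x y, @dist _ inst.toDist x y = D x y) ∧
      @dimH _ (@MetricSpace.toEMetricSpace _ inst) univ
        = ∑ i, ((Q i / α i : ℝ≥0) : ℝ≥0∞) := by
  let e : (∀ i, X i) ≃
      ∀ i, Snowflaking (X i) (α i) (NNReal.coe_pos.2 (hα₀ i)) (NNReal.coe_le_one.2 (hα₁ i)) :=
    Equiv.piCongrRight fun _ => toSnowflaking
  let inst : MetricSpace (∀ i, X i) := .induced e e.injective inferInstance
  have dist_eq (x y) : D x y = dist (e x) (e y) :=
    (hD x y).trans (dist_pi_eq_ciSup (e x) (e y)).symm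
  have dimH_eq := (@IsometryEquiv.dimH_univ _ _ inst.toEMetricSpace _
    (@IsometryEquiv.mk _ _ (_) _ e fun _ _ => rfl)).trans (dimH_univ_pi_snowflaking hμ hα₀ hα₁)
  simp only [dist_eq]
  exact ⟨fun x y => dist_eq_zero.trans e.injective.eq_iff, fun _ _ => dist_comm _ _,
    fun _ _ _ => dist_triangle _ _ _, inst, fun _ _ => rfl, dimH_eq⟩

end

/-- On the product `E = ∏_{i=1}^k ℝ^{m_i}`, the formula
`D(x,y) = max_i ‖x_i − y_i‖^{1/n_i}` defines a metric, and the Hausdorff dimension of `(E, D)`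
equals `∑_i n_i · m_i`. -/
theorem hausdorff_dimension_of_snowflake_product
    (k : ℕ) (hk : 1 ≤ k) (m n : Fin k → ℕ)
    (hm : ∀ i, 0 < m i) (hn : ∀ i, 0 < n i)
    (D : (∀ i : Fin k, EuclideanSpace ℝ (Fin (m i))) →
      (∀ i : Fin k, EuclideanSpace ℝ (Fin (m i))) → ℝ)
    (hD : ∀ x y, D x y = ⨆ i : Fin k, ‖x i - y i‖ ^ ((n i : ℝ)⁻¹)) :
    (∀ x y, D x y = 0 ↔ x = y) ∧
    (∀ x y, D x y = D y x) ∧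
    (∀ x y z, D x z ≤ D x y + D y z) ∧
    ∃ inst : MetricSpace (∀ i : Fin k, EuclideanSpace ℝ (Fin (m i))),
      (∀ x y, @dist _ inst.toDist x y = D x y) ∧
      @dimH _ (@MetricSpace.toEMetricSpace _ inst) Set.univ
        = ∑ i : Fin k, ((n i : ℝ≥0∞) * (m i : ℝ≥0∞)) := by
  have : Nonempty (Fin k) := ⟨⟨0, hk⟩⟩
  simpa [mul_comm] using hausdorff_dimension_of_snowflake_product_general
    (α := fun i => (n i : NNReal)⁻¹)
    (fun i => .of_isAddHaarMeasure (volume : Measure (EuclideanSpace ℝ (Fin (m i)))))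
    (fun i => by simpa using hn i) (fun i => inv_le_one_of_one_le₀ (mod_cast hn i))
    D (by simpa [dist_eq_norm] using hD)
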